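/- For every n ≥ 1 there is a constant C_n > 0 such that for every finite field 𝔽_q of odd characteristic and all pairwise distinct elements b_1, …, b_n ∈ 𝔽_q, the set S := {x ∈ 𝔽_q : x + b_1 is a square in 𝔽_q, and x + b_i is not a square in 𝔽_q for all 2 ≤ i ≤ n} satisfies | |S| − q/2ⁿ | ≤ C_n · q^{1/2}. -/

import Mathlib

/-!
Let `χ` be the quadratic character and `εᵢ = ±1` according to whether `x + bᵢ` is to be a square.
Off the at most `n` points where some `x + bᵢ` vanishes, `∏ᵢ (1 + εᵢ χ(x + bᵢ))` is `2ⁿ` times the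
indicator of `S`. Expanding the product and summing over `x`, the empty subset contributes `q`, and
every other subset contributes `± ∑ₓ χ(f x)` for a separable monic `f`. So it suffices that such
sums are `O(√q)`.

This is Stepanov's method. Let `f` be monic and not a square, translated so that `f(0) ≠ 0`, and
put `c = (q - 1) / 2`. Linear algebra provides polynomials `rⱼ`, `sⱼ` of low degree, not all zero,
for which `f ^ l * ∑ⱼ (rⱼ + sⱼ f ^ c) X ^ (j q)` vanishes to order `l ≈ √q` at every point where
`f ^ c = ε`. That polynomial is nonzero: its lowest nonzero block would otherwise give
`r ^ 2 f = f(0) s ^ 2`, making `f` a square. Comparing its degree with its zeros bounds the number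
of points with `χ(f x) = ε` by `q / 2 + O(√q)`, and since this holds for both signs `ε`, the
character sum is bounded on both sides.
-/

open Polynomial

section HasseDeriv

variable {R : Type*} [CommSemiring R]

theorem pow_sub_dvd_hasseDeriv_pow (f : R[X]) (a k : ℕ) :
    f ^ (a - k) ∣ hasseDeriv k (f ^ a) := by
  induction a generalizing k with
  | zero => simp
  | succ a ih =>
    rw [pow_succ', hasseDeriv_mul]
    refine Finset.dvd_sum fun ⟨i, j⟩ hij ↦ ?_
    obtain rfl : i + j = k := Finset.HasAntidiagonal.mem_antidiagonal.1 hij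
    rcases i.eq_zero_or_pos with rfl | hi
    · have hdvd : f ^ (a - j + 1) ∣ f * hasseDeriv j (f ^ a) :=
        pow_succ' f (a - j) ▸ mul_dvd_mul_left f (ih j)
      rw [hasseDeriv_zero']
      exact (pow_dvd_pow f (by lia)).trans hdvd
    · exact ((pow_dvd_pow f (by lia)).trans (ih j)).mul_left _

theorem exists_linearMap_hasseDeriv_pow_mul_eq (f : R[X]) (a k : ℕ) :
    ∃ E : R[X] →ₗ[R] R[X], ∀ g, hasseDeriv k (f ^ a * g) = f ^ (a - k) * E g := by
  have hdvd (i : ℕ) : ∃ P, i ≤ k → hasseDeriv i (f ^ a) = f ^ (a - k) * P := by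
    by_cases hi : i ≤ k
    · obtain ⟨P, hP⟩ := (pow_dvd_pow f (Nat.sub_le_sub_left hi a)).trans
        (pow_sub_dvd_hasseDeriv_pow f a i)
      exact ⟨P, fun _ ↦ hP⟩
    · exact ⟨0, fun h ↦ absurd h hi⟩
  choose P hP using hdvd
  refine ⟨∑ ij ∈ Finset.HasAntidiagonal.antidiagonal k,
      LinearMap.mulLeft R (P ij.1) ∘ₗ hasseDeriv ij.2,
    fun g ↦ ?_⟩
  rw [hasseDeriv_mul, LinearMap.sum_apply, Finset.mul_sum]
  refine Finset.sum_congr rfl fun ij hij ↦ ?_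
  rw [hP _ (Finset.HasAntidiagonal.antidiagonal.fst_le hij), mul_assoc, LinearMap.comp_apply,
    LinearMap.mulLeft_apply]

theorem natDegree_le_of_hasseDeriv_pow_mul_eq {f g P : R[X]} (hf : f.Monic) {a k : ℕ}
    (hk : k ≤ a) (h : hasseDeriv k (f ^ a * g) = f ^ (a - k) * P) :
    P.natDegree ≤ g.natDegree + k * f.natDegree := by
  by_cases hP : P = 0
  · simp [hP]
  have hle : (a - k) * f.natDegree + P.natDegree ≤ a * f.natDegree + g.natDegree - k := calc
    _ = (hasseDeriv k (f ^ a * g)).natDegree := by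
      rw [h, (hf.pow _).natDegree_mul' hP, hf.natDegree_pow]
    _ ≤ (f ^ a * g).natDegree - k := natDegree_hasseDeriv_le _ _
    _ ≤ (f ^ a).natDegree + g.natDegree - k := Nat.sub_le_sub_right natDegree_mul_le _
    _ = _ := by rw [hf.natDegree_pow]
  obtain ⟨d, rfl⟩ := Nat.exists_eq_add_of_le hk
  rw [Nat.add_sub_cancel_left, add_mul] at hle
  lia

end HasseDeriv

theorem X_sub_C_pow_dvd_iff_forall_eval_hasseDeriv {R : Type*} [CommRing R] {p : R[X]} {x : R}
    {l : ℕ} : (X - C x) ^ l ∣ p ↔ ∀ k < l, (hasseDeriv k p).eval x = 0 := by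
  simp only [X_sub_C_pow_dvd_iff, X_pow_dvd_iff, ← taylor_coeff, taylor_apply]


theorem exists_ne_zero_forall_sum_eq_zero_of_card_mul_lt {K ι κ : Type*} [Field K] [Fintype ι]
    [Fintype κ] {A D : ℕ} (Φ : κ → ι → K[X] →ₗ[K] K[X])
    (hΦ : ∀ k i p, p.natDegree < A → (Φ k i p).natDegree < D)
    (hcard : Fintype.card κ * D < Fintype.card ι * A) :
    ∃ u : ι → K[X], u ≠ 0 ∧ (∀ i, (u i).natDegree < A) ∧ ∀ k, ∑ i, Φ k i (u i) = 0 := by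
  have hA : 0 < A := Nat.pos_of_ne_zero (by rintro rfl; simp at hcard)
  have natDegree_lt {p : K[X]} (hp : p ∈ K[X]_A) : p.natDegree < A := by
    by_cases hp0 : p = 0
    · simpa [hp0] using hA
    · exact (natDegree_lt_iff_degree_lt hp0).2 (mem_degreeLT.1 hp)
  have mapsTo (k : κ) (i : ι) : ∀ p ∈ K[X]_A, Φ k i p ∈ K[X]_D := fun p hp ↦
    mem_degreeLT.2 (degree_le_natDegree.trans_lt (Nat.cast_lt.2 (hΦ k i p (natDegree_lt hp))))
  let Ψ : (ι → K[X]_A) →ₗ[K] κ → K[X]_D :=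
    LinearMap.pi fun k ↦ ∑ i, (Φ k i).restrict (mapsTo k i) ∘ₗ LinearMap.proj i
  have finrank_degreeLT (n : ℕ) : Module.finrank K (K[X]_n) = n := by
    simp [Module.finrank_eq_card_basis (degreeLT.basis K n)]
  have hker : LinearMap.ker Ψ ≠ ⊥ := LinearMap.ker_ne_bot_of_finrank_lt
    (by simpa [Module.finrank_pi_fintype, finrank_degreeLT] using hcard)
  obtain ⟨u, hu, hu0⟩ := (Submodule.ne_bot_iff _).1 hker
  refine ⟨fun i ↦ u i, fun h ↦ hu0 ?_, fun i ↦ natDegree_lt (u i).2, fun k ↦ ?_⟩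
  · exact funext fun i ↦ Subtype.ext (congrFun h i)
  · simpa [Ψ] using congrArg (fun v ↦ (v k : K[X])) (LinearMap.mem_ker.1 hu)

theorem eq_zero_of_sq_mul_eq_C_mul_sq {K : Type*} [Field K] {f r s : K[X]} {a : K} (hf : f.Monic)
    (hsq : ¬ IsSquare f) (h : r ^ 2 * f = C a * s ^ 2) : r = 0 := by
  by_contra hr
  have hs : s.leadingCoeff ≠ 0 := by
    rw [leadingCoeff_ne_zero]
    rintro rfl
    simp [hr, hf.ne_zero] at h
  obtain ⟨d, rfl⟩ : ∃ d, a = d ^ 2 := by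
    refine ⟨r.leadingCoeff / s.leadingCoeff, ?_⟩
    have := congrArg leadingCoeff h
    simp only [leadingCoeff_mul, leadingCoeff_pow, leadingCoeff_C, hf.leadingCoeff, mul_one] at this
    field_simp
    exact this.symm
  rw [C_pow, ← mul_pow] at h
  obtain ⟨t, ht⟩ := (UniqueFactorizationMonoid.pow_dvd_pow_iff_dvd two_ne_zero).1 (Dvd.intro f h)
  rw [ht, mul_pow] at h
  exact hsq (isSquare_iff_exists_sq f |>.2 ⟨t, mul_left_cancel₀ (pow_ne_zero 2 hr) h⟩)

section Frobenius

variable {F : Type*} [Field F] [Fintype F]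

theorem X_pow_card_dvd_pow_card_sub_C (f : F[X]) :
    X ^ Fintype.card F ∣ f ^ Fintype.card F - C (f.eval 0) := by
  have hX : X ∣ f - C (f.eval 0) := by simp [X_dvd_iff, coeff_zero_eq_eval_zero]
  have hpow := pow_dvd_pow_of_dvd hX (Fintype.card F)
  rwa [← FiniteField.expand_card (f - _), map_sub, FiniteField.expand_card, expand_C] at hpow

theorem X_sub_C_pow_card_dvd (x : F) (j : ℕ) :
    (X - C x) ^ Fintype.card F ∣ X ^ (j * Fintype.card F) - C (x ^ j) := by
  have hX : (X - C x) ^ Fintype.card F = X ^ Fintype.card F - C x := by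
    rw [← FiniteField.expand_card, map_sub, expand_X, expand_C]
  rw [hX, mul_comm, pow_mul, C_pow]
  exact sub_dvd_pow_sub_pow _ _ _

theorem eval_hasseDeriv_mul_X_pow_mul_card (g : F[X]) (x : F) (j : ℕ) {k : ℕ}
    (hk : k < Fintype.card F) :
    (hasseDeriv k (g * X ^ (j * Fintype.card F))).eval x = x ^ j * (hasseDeriv k g).eval x := by
  have h := X_sub_C_pow_dvd_iff_forall_eval_hasseDeriv.1
    ((X_sub_C_pow_card_dvd x j).mul_left g) k hk
  rwa [mul_sub, mul_comm g (C _), ← smul_eq_C_mul, map_sub, map_smul, eval_sub, eval_smul,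
    smul_eq_mul, sub_eq_zero] at h

end Frobenius

section Stepanov

variable {F : Type*} [Field F] [Fintype F] {f : F[X]} {c J : ℕ}

theorem eq_zero_and_eq_zero_of_X_pow_card_dvd_add_mul_pow (hf : f.Monic) (hsq : ¬ IsSquare f)
    (h0 : f.eval 0 ≠ 0) (hc : Fintype.card F = 2 * c + 1) {r s : F[X]}
    (hr : 2 * r.natDegree + f.natDegree < Fintype.card F)
    (hs : 2 * s.natDegree < Fintype.card F)
    (h : X ^ Fintype.card F ∣ r + s * f ^ c) : r = 0 ∧ s = 0 := by
  -- Multiplying by `(r - s * f ^ c) * f` turns `f ^ c` into `f ^ q`, which is `f 0` modulo `X ^ q`.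
  have hdvd : X ^ Fintype.card F ∣ r ^ 2 * f - C (f.eval 0) * s ^ 2 := by
    have hsplit : r ^ 2 * f - C (f.eval 0) * s ^ 2 =
        (r + s * f ^ c) * ((r - s * f ^ c) * f) +
          (f ^ Fintype.card F - C (f.eval 0)) * s ^ 2 := by
      rw [hc]; ring
    rw [hsplit]
    exact dvd_add (h.mul_right _) ((X_pow_card_dvd_pow_card_sub_C f).mul_right _)
  have hdeg : (r ^ 2 * f - C (f.eval 0) * s ^ 2).natDegree < Fintype.card F := by
    refine (natDegree_sub_le _ _).trans_lt (max_lt ?_ ?_)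
    · exact natDegree_mul_le.trans_lt (by rwa [natDegree_pow])
    · exact (natDegree_C_mul_le _ _).trans_lt (by rwa [natDegree_pow])
  have heq : r ^ 2 * f = C (f.eval 0) * s ^ 2 :=
    sub_eq_zero.1 (eq_zero_of_dvd_of_natDegree_lt hdvd (by rwa [natDegree_X_pow]))
  obtain rfl := eq_zero_of_sq_mul_eq_C_mul_sq hf hsq heq
  simpa [h0] using heq.symm

theorem eq_zero_and_eq_zero_of_sum_add_mul_pow_mul_X_pow_eq_zero (hf : f.Monic)
    (hsq : ¬ IsSquare f) (h0 : f.eval 0 ≠ 0) (hc : Fintype.card F = 2 * c + 1)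
    {r s : Fin J → F[X]} (hr : ∀ j, 2 * (r j).natDegree + f.natDegree < Fintype.card F)
    (hs : ∀ j, 2 * (s j).natDegree < Fintype.card F)
    (h : ∑ j, (r j + s j * f ^ c) * X ^ ((j : ℕ) * Fintype.card F) = 0) : r = 0 ∧ s = 0 := by
  induction J with
  | zero => exact ⟨Subsingleton.elim _ _, Subsingleton.elim _ _⟩
  | succ J ih =>
    have htail : ∑ j : Fin J, (r j.succ + s j.succ * f ^ c) * X ^ ((j.succ : ℕ) * Fintype.card F) =
        X ^ Fintype.card F *
          ∑ j : Fin J, (r j.succ + s j.succ * f ^ c) * X ^ ((j : ℕ) * Fintype.card F) := by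
      rw [Finset.mul_sum]
      exact Finset.sum_congr rfl fun j _ ↦ by rw [Fin.val_succ]; ring
    rw [Fin.sum_univ_succ, htail, Fin.val_zero, zero_mul, pow_zero, mul_one] at h
    obtain ⟨hr0, hs0⟩ := eq_zero_and_eq_zero_of_X_pow_card_dvd_add_mul_pow hf hsq h0 hc (hr 0)
      (hs 0) (eq_neg_of_add_eq_zero_left h ▸ (dvd_mul_right _ _).neg_right)
    rw [hr0, hs0, zero_mul, add_zero, zero_add, mul_eq_zero, or_iff_right (by simp)] at h
    obtain ⟨hr', hs'⟩ := ih (fun j ↦ hr j.succ) (fun j ↦ hs j.succ) h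
    exact ⟨funext (Fin.cases hr0 (congrFun hr')), funext (Fin.cases hs0 (congrFun hs'))⟩

/-- Stepanov's auxiliary polynomial over `𝔽_q`. On the points where `f ^ c` is a given constant,
`f ^ c` and the powers `X ^ (j * q)` look like polynomials of low degree, so its vanishing there to
order `l` costs few linear conditions on the coefficients of the `r j` and `s j`. -/
noncomputable def stepanovPoly (f : F[X]) (l c : ℕ) (r s : Fin J → F[X]) : F[X] :=
  f ^ l * ∑ j, (r j + s j * f ^ c) * X ^ ((j : ℕ) * Fintype.card F)

theorem stepanovPoly_ne_zero (hf : f.Monic) (hsq : ¬ IsSquare f) (h0 : f.eval 0 ≠ 0)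
    (hc : Fintype.card F = 2 * c + 1) (l : ℕ) {r s : Fin J → F[X]}
    (hr : ∀ j, 2 * (r j).natDegree + f.natDegree < Fintype.card F)
    (hs : ∀ j, 2 * (s j).natDegree < Fintype.card F) (hrs : ¬ (r = 0 ∧ s = 0)) :
    stepanovPoly f l c r s ≠ 0 :=
  mul_ne_zero (pow_ne_zero l hf.ne_zero) fun h ↦
    hrs (eq_zero_and_eq_zero_of_sum_add_mul_pow_mul_X_pow_eq_zero hf hsq h0 hc hr hs h)

theorem natDegree_stepanovPoly_le (f : F[X]) (l c : ℕ) {A : ℕ} {r s : Fin J → F[X]}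
    (hr : ∀ j, (r j).natDegree ≤ A) (hs : ∀ j, (s j).natDegree ≤ A) :
    (stepanovPoly f l c r s).natDegree ≤
      (l + c) * f.natDegree + A + J * Fintype.card F := by
  have hterm (j : Fin J) :
      ((r j + s j * f ^ c) * X ^ ((j : ℕ) * Fintype.card F)).natDegree ≤
        A + c * f.natDegree + J * Fintype.card F := by
    refine natDegree_mul_le.trans (add_le_add ?_ ?_)
    · refine natDegree_add_le_of_degree_le ((hr j).trans (Nat.le_add_right _ _)) ?_
      exact natDegree_mul_le.trans (add_le_add (hs j) natDegree_pow_le)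
    · rw [natDegree_X_pow]
      exact Nat.mul_le_mul_right _ j.2.le
  calc (stepanovPoly f l c r s).natDegree
      ≤ l * f.natDegree + (A + c * f.natDegree + J * Fintype.card F) :=
        natDegree_mul_le.trans (add_le_add natDegree_pow_le
          (natDegree_sum_le_of_forall_le _ _ fun j _ ↦ hterm j))
    _ = _ := by ring

theorem eval_hasseDeriv_stepanovPoly {l k : ℕ} (hkl : k ≤ l) (hk : k < Fintype.card F)
    {E₀ E₁ : F[X] → F[X]} (h₀ : ∀ g, hasseDeriv k (f ^ l * g) = f ^ (l - k) * E₀ g)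
    (h₁ : ∀ g, hasseDeriv k (f ^ (l + c) * g) = f ^ (l + c - k) * E₁ g)
    (r s : Fin J → F[X]) (x : F) :
    (hasseDeriv k (stepanovPoly f l c r s)).eval x = f.eval x ^ (l - k) *
      ∑ j : Fin J, x ^ (j : ℕ) * ((E₀ (r j)).eval x + f.eval x ^ c * (E₁ (s j)).eval x) := by
  have hexpand : stepanovPoly f l c r s = ∑ j : Fin J,
      (f ^ l * r j + f ^ (l + c) * s j) * X ^ ((j : ℕ) * Fintype.card F) := by
    rw [stepanovPoly, Finset.mul_sum]
    exact Finset.sum_congr rfl fun j _ ↦ by rw [pow_add]; ring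
  rw [hexpand, map_sum, eval_finsetSum, Finset.mul_sum]
  refine Finset.sum_congr rfl fun j _ ↦ ?_
  rw [eval_hasseDeriv_mul_X_pow_mul_card _ x j hk, map_add, h₀, h₁, Nat.sub_add_comm hkl]
  simp only [eval_add, eval_mul, eval_pow]
  ring

theorem exists_stepanovPoly_forall_X_sub_C_pow_dvd (hf : f.Monic) (c : ℕ) {l A : ℕ}
    (hl : l ≤ Fintype.card F) (hcount : l * (A + l * f.natDegree + J) < 2 * J * A) (ε : F) :
    ∃ r s : Fin J → F[X], ¬ (r = 0 ∧ s = 0) ∧ (∀ j, (r j).natDegree < A) ∧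
      (∀ j, (s j).natDegree < A) ∧
      ∀ x, f.eval x ^ c = ε → (X - C x) ^ l ∣ stepanovPoly f l c r s := by
  choose E hE using fun k a ↦ exists_linearMap_hasseDeriv_pow_mul_eq f a k
  let Φ (k : Fin l) : Fin J ⊕ Fin J → F[X] →ₗ[F] F[X] :=
    Sum.elim (fun j ↦ LinearMap.mulRight F (X ^ (j : ℕ)) ∘ₗ E k l)
      (fun j ↦ LinearMap.mulRight F (C ε * X ^ (j : ℕ)) ∘ₗ E k (l + c))
  have hΦ (k : Fin l) (i : Fin J ⊕ Fin J) (p : F[X]) (hp : p.natDegree < A) :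
      (Φ k i p).natDegree < A + l * f.natDegree + J := by
    have hE_deg (a : ℕ) (ha : l ≤ a) : (E k a p).natDegree < A + l * f.natDegree := by
      have hle := natDegree_le_of_hasseDeriv_pow_mul_eq hf (k.2.le.trans ha) (hE k a p)
      have hmul : k * f.natDegree ≤ l * f.natDegree := Nat.mul_le_mul_right _ k.2.le
      lia
    rcases i with j | j
    · exact natDegree_mul_le.trans_lt
        (add_lt_add (hE_deg l le_rfl) ((natDegree_X_pow_le _).trans_lt j.2))
    · exact natDegree_mul_le.trans_lt
        (add_lt_add (hE_deg _ (Nat.le_add_right l c)) ((natDegree_C_mul_X_pow_le _ _).trans_lt j.2))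
  obtain ⟨u, hu0, hudeg, hu⟩ := exists_ne_zero_forall_sum_eq_zero_of_card_mul_lt Φ hΦ
    (by simpa [← two_mul] using hcount)
  refine ⟨u ∘ Sum.inl, u ∘ Sum.inr, fun ⟨hu₀, hu₁⟩ ↦ hu0 ?_, fun j ↦ hudeg _, fun j ↦ hudeg _,
    fun x hx ↦ X_sub_C_pow_dvd_iff_forall_eval_hasseDeriv.2 fun k hk ↦ ?_⟩
  · exact funext (Sum.rec (congrFun hu₀) (congrFun hu₁))
  · have hsum := congrArg (eval x) (hu ⟨k, hk⟩)
    rw [eval_hasseDeriv_stepanovPoly hk.le (hk.trans_le hl) (hE k l) (hE k (l + c)), hx]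
    refine mul_eq_zero_of_right _ (Eq.trans ?_ (hsum.trans eval_zero))
    rw [Fintype.sum_sum_type, ← Finset.sum_add_distrib, eval_finsetSum]
    refine Finset.sum_congr rfl fun j _ ↦ ?_
    simp only [Φ, Sum.elim_inl, Sum.elim_inr, LinearMap.comp_apply, LinearMap.mulRight_apply,
      Function.comp_apply, eval_add, eval_mul, eval_pow, eval_X, eval_C]
    ring

theorem card_mul_le_natDegree_of_forall_X_sub_C_pow_dvd {K : Type*} [Field K] {p : K[X]}
    (hp : p ≠ 0) {l : ℕ} {T : Finset K} (hT : ∀ x ∈ T, (X - C x) ^ l ∣ p) :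
    T.card * l ≤ p.natDegree := by
  have hprod : ∏ x ∈ T, (X - C x) ^ l ∣ p := Finset.prod_dvd_of_coprime
    (fun x _ y _ hxy ↦ (pairwise_coprime_X_sub_C Function.injective_id hxy).pow) hT
  have hdeg := natDegree_le_of_dvd hprod hp
  rw [natDegree_prod_of_monic _ _ fun x _ ↦ (monic_X_sub_C x).pow l] at hdeg
  simpa using hdeg

theorem card_mul_le_of_forall_eval_pow_eq (hf : f.Monic) (hsq : ¬ IsSquare f)
    (h0 : f.eval 0 ≠ 0) (hc : Fintype.card F = 2 * c + 1) {l A : ℕ} (hl : l ≤ Fintype.card F)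
    (hA : 2 * A + f.natDegree ≤ Fintype.card F)
    (hcount : l * (A + l * f.natDegree + J) < 2 * J * A) {ε : F} {T : Finset F}
    (hT : ∀ x ∈ T, f.eval x ^ c = ε) :
    T.card * l ≤ (l + c) * f.natDegree + A + J * Fintype.card F := by
  obtain ⟨r, s, hrs, hr, hs, hdvd⟩ := exists_stepanovPoly_forall_X_sub_C_pow_dvd hf c hl hcount ε
  have hne := stepanovPoly_ne_zero hf hsq h0 hc l (fun j ↦ by have := hr j; lia)
    (fun j ↦ by have := hs j; lia) hrs
  exact (card_mul_le_natDegree_of_forall_X_sub_C_pow_dvd hne fun x hx ↦ hdvd x (hT x hx)).trans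
    (natDegree_stepanovPoly_le f l c (fun j ↦ (hr j).le) (fun j ↦ (hs j).le))

end Stepanov

section PointCount

theorem one_le_sqrt_card (α : Type*) [Fintype α] [Nonempty α] : 1 ≤ √(Fintype.card α : ℝ) :=
  Real.one_le_sqrt.2 (by exact_mod_cast Fintype.card_pos)

theorem stepanov_parameter_inequality {q m l A J : ℕ} (hl : l * l ≤ q) (hml : 8 * (m + 3) ≤ l)
    (hA : q ≤ 2 * A + m + 1) (hJ : l + 2 * (m + 3) ≤ 2 * J + 1) (hJ' : 2 * J ≤ l + 2 * (m + 3)) :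
    l * (A + l * m + J) < 2 * J * A := by
  linarith [Nat.mul_le_mul_right (2 * A) hJ, Nat.mul_le_mul_left l hJ',
    Nat.mul_le_mul_left (2 * m + 5) hA, Nat.mul_le_mul_left (2 * m + 1) hl,
    Nat.mul_le_mul_right l hml, Nat.mul_le_mul hml hml]

variable {F : Type*} [Field F] [Fintype F] {f : F[X]}

theorem card_le_of_forall_eval_pow_eq_of_le_sqrt (hF : ringChar F ≠ 2) (hf : f.Monic)
    (hsq : ¬ IsSquare f) (h0 : f.eval 0 ≠ 0)
    (hlarge : 8 * (f.natDegree + 3) ≤ Nat.sqrt (Fintype.card F)) {ε : F} {T : Finset F}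
    (hT : ∀ x ∈ T, f.eval x ^ (Fintype.card F / 2) = ε) :
    (T.card : ℝ) ≤ Fintype.card F / 2 + (4 * f.natDegree + 7) * √(Fintype.card F) := by
  have hodd := FiniteField.odd_card_of_char_ne_two hF
  have hsqrt := Real.mul_self_sqrt (Nat.cast_nonneg (α := ℝ) (Fintype.card F))
  have hl_lt := Real.real_sqrt_lt_nat_sqrt_succ (a := Fintype.card F)
  have hlq := Nat.sqrt_le (Fintype.card F)
  set m := f.natDegree
  set q := Fintype.card F
  set l := Nat.sqrt q
  set s := √(q : ℝ)
  have hmq : m ≤ q := by nlinarith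
  -- Stepanov's parameters: order of vanishing `l = ⌊√q⌋`, coefficients of degree below
  -- `A = (q - m) / 2`, the largest the nonvanishing lemma allows, and `J = l / 2 + m + 3`, which is
  -- where the unknowns `2 * J * A` overtake the conditions `l * (A + l * m + J)`.
  have hstep : T.card * l ≤ (l + q / 2) * m + (q - m) / 2 + (l / 2 + (m + 3)) * q :=
    card_mul_le_of_forall_eval_pow_eq hf hsq h0 (by lia) (Nat.sqrt_le_self q) (by lia)
      (stepanov_parameter_inequality hlq hlarge (by lia) (by lia) (by lia)) hT
  have hstep_real : (T.card : ℝ) * l ≤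
      (l + q / 2) * m + q / 2 + (l / 2 + (m + 3)) * q := by
    have hhalf : (((q - m) / 2 : ℕ) : ℝ) ≤ q / 2 := by
      rw [le_div_iff₀ two_pos]
      exact_mod_cast (by lia : (q - m) / 2 * 2 ≤ q)
    calc (T.card : ℝ) * l
        ≤ (l + (q / 2 : ℕ)) * m + ((q - m) / 2 : ℕ) + ((l / 2 : ℕ) + (m + 3)) * q := by
          exact_mod_cast hstep
      _ ≤ _ := by gcongr <;> exact Nat.cast_div_le
  have hl : (24 : ℝ) ≤ l := by exact_mod_cast (by lia : 24 ≤ l)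
  have hs : 1 ≤ s := one_le_sqrt_card F
  have hqs : (q : ℝ) ≤ 2 * l * s := by
    rw [← hsqrt]
    gcongr
    linarith
  refine le_of_mul_le_mul_right ?_ (by linarith : (0 : ℝ) < l)
  calc (T.card : ℝ) * l ≤ q / 2 * l + m * l * 1 + (3 / 2 * m + 7 / 2) * q := by linarith
    _ ≤ q / 2 * l + m * l * s + (3 / 2 * m + 7 / 2) * (2 * l * s) := by gcongr
    _ = (q / 2 + (4 * m + 7) * s) * l := by ring

theorem card_le_of_forall_eval_pow_eq_of_eval_zero_ne_zero (hF : ringChar F ≠ 2) (hf : f.Monic)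
    (hsq : ¬ IsSquare f) (h0 : f.eval 0 ≠ 0) {ε : F} {T : Finset F}
    (hT : ∀ x ∈ T, f.eval x ^ (Fintype.card F / 2) = ε) :
    (T.card : ℝ) ≤ Fintype.card F / 2 + (4 * f.natDegree + 13) * √(Fintype.card F) := by
  rcases le_or_gt (8 * (f.natDegree + 3)) (Nat.sqrt (Fintype.card F)) with hlarge | hsmall
  · refine (card_le_of_forall_eval_pow_eq_of_le_sqrt hF hf hsq h0 hlarge hT).trans ?_
    gcongr
    norm_num
  · have hs : √(Fintype.card F : ℝ) ≤ 8 * (f.natDegree + 3) :=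
      (Real.real_sqrt_lt_nat_sqrt_succ).le.trans (by exact_mod_cast hsmall)
    calc (T.card : ℝ) ≤ Fintype.card F := by exact_mod_cast Finset.card_le_univ T
      _ = Fintype.card F / 2 + √(Fintype.card F) / 2 * √(Fintype.card F) := by
        rw [div_mul_eq_mul_div, Real.mul_self_sqrt (Nat.cast_nonneg _), add_halves]
      _ ≤ _ := by gcongr; linarith

theorem card_le_of_forall_eval_pow_eq (hF : ringChar F ≠ 2) (hf : f.Monic) (hsq : ¬ IsSquare f)
    {ε : F} (hε : ε ≠ 0) {T : Finset F} (hT : ∀ x ∈ T, f.eval x ^ (Fintype.card F / 2) = ε) :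
    (T.card : ℝ) ≤ Fintype.card F / 2 + (4 * f.natDegree + 13) * √(Fintype.card F) := by
  rcases T.eq_empty_or_nonempty with rfl | ⟨x₀, hx₀⟩
  · simp only [Finset.card_empty, Nat.cast_zero]
    positivity
  have hodd := FiniteField.odd_card_of_char_ne_two hF
  have hfx₀ : f.eval x₀ ≠ 0 := by
    intro h
    have hcard := Fintype.one_lt_card (α := F)
    exact hε (by rw [← hT x₀ hx₀, h, zero_pow (by lia)])
  have hsq' : ¬ IsSquare (taylor x₀ f) := fun h ↦ hsq <| by
    simpa [taylor_taylor] using h.map (taylorAlgHom (-x₀))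
  have h := card_le_of_forall_eval_pow_eq_of_eval_zero_ne_zero hF
    ((leadingCoeff_taylor x₀ f).trans hf) hsq' (by rwa [taylor_eval, zero_add])
    (T := T.map (Equiv.subRight x₀).toEmbedding) (ε := ε)
    (by simpa [taylor_eval] using fun x hx ↦ hT (x + x₀) hx)
  rwa [Finset.card_map, natDegree_taylor] at h

end PointCount

section QuadraticChar

variable {F : Type*} [Field F] [Fintype F] [DecidableEq F]

theorem units_mul_quadraticChar_add_one (ε : ℤˣ) (y : F) :
    ε * quadraticChar F y + 1 =
      2 * (if quadraticChar F y = ε then 1 else 0) + (if y = 0 then 1 else 0) := by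
  by_cases hy : y = 0
  · simp [hy, eq_comm]
  · rcases quadraticChar_dichotomy hy with h | h <;>
      rcases Int.units_eq_one_or ε with rfl | rfl <;> simp [h, hy]

theorem units_mul_sum_quadraticChar_add_card {α : Type*} [Fintype α] (ε : ℤˣ) (g : α → F) :
    ε * ∑ x, quadraticChar F (g x) + Fintype.card α =
      2 * (Finset.univ.filter fun x ↦ quadraticChar F (g x) = ε).card +
        (Finset.univ.filter fun x ↦ g x = 0).card := by
  have hsum := Finset.sum_congr (rfl : (Finset.univ : Finset α) = _)
    fun x _ ↦ units_mul_quadraticChar_add_one ε (g x)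
  simpa only [Finset.sum_add_distrib, ← Finset.mul_sum, Finset.sum_boole, Finset.sum_const,
    Finset.card_univ, nsmul_one] using hsum

theorem abs_sum_quadraticChar_eval_le (hF : ringChar F ≠ 2) {f : F[X]} (hf : f.Monic)
    (hsq : ¬ IsSquare f) :
    |((∑ x, quadraticChar F (f.eval x) : ℤ) : ℝ)| ≤
      (9 * f.natDegree + 26) * √(Fintype.card F) := by
  have hzeros : (Finset.univ.filter fun x ↦ f.eval x = 0).card ≤ f.natDegree := by
    refine (Finset.card_le_card fun x hx ↦ ?_).trans
      ((Multiset.toFinset_card_le _).trans (card_roots' f))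
    simpa [hf.ne_zero] using hx
  have hzeros_real : ((Finset.univ.filter fun x ↦ f.eval x = 0).card : ℝ) ≤
      f.natDegree * √(Fintype.card F) :=
    (Nat.cast_le.2 hzeros).trans (le_mul_of_one_le_right (Nat.cast_nonneg _) (one_le_sqrt_card F))
  have hsigned (ε : ℤˣ) : ((ε * ∑ x, quadraticChar F (f.eval x) : ℤ) : ℝ) ≤
      (9 * f.natDegree + 26) * √(Fintype.card F) := by
    have hcount := card_le_of_forall_eval_pow_eq hF hf hsq
      (ε.isUnit.map (Int.castRingHom F)).ne_zero
      (T := Finset.univ.filter fun x ↦ quadraticChar F (f.eval x) = ε) fun x hx ↦ by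
        rw [← quadraticChar_eq_pow_of_char_ne_two' hF, (Finset.mem_filter.1 hx).2, eq_intCast]
    have hsum := congrArg (Int.cast (R := ℝ))
      (units_mul_sum_quadraticChar_add_card ε fun x ↦ f.eval x)
    push_cast at hsum ⊢
    linarith
  exact abs_le'.2 ⟨by simpa using hsigned 1, by simpa using hsigned (-1)⟩

end QuadraticChar

theorem not_isSquare_prod_X_add_C {K ι : Type*} [Field K] {b : ι → K} {T : Finset ι}
    (hb : Set.InjOn b T) (hT : T.Nonempty) : ¬ IsSquare (∏ i ∈ T, (X + C (b i))) := by
  rintro ⟨g, hg⟩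
  have hsep : (∏ i ∈ T, (X - C (-b i))).Separable := separable_prod_X_sub_C_iff'.2
    fun i hi j hj h ↦ hb hi hj (neg_injective h)
  simp only [map_neg, sub_neg_eq_add, hg] at hsep
  have hdeg := natDegree_prod_of_monic T _ fun i _ ↦ monic_X_add_C (b i)
  rw [hg, natDegree_eq_zero_of_isUnit ((hsep.squarefree g dvd_rfl).mul (hsep.squarefree g dvd_rfl))]
    at hdeg
  simp [eq_comm, hT.ne_empty] at hdeg

section QuadraticCharProd

variable {F : Type*} [Field F] [Fintype F] [DecidableEq F] {ι : Type*}

theorem abs_sum_prod_quadraticChar_add_le (hF : ringChar F ≠ 2) {b : ι → F} {T : Finset ι}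
    (hb : Set.InjOn b T) (hT : T.Nonempty) :
    |((∑ x, ∏ i ∈ T, quadraticChar F (x + b i) : ℤ) : ℝ)| ≤
      (9 * T.card + 26) * √(Fintype.card F) := by
  have h := abs_sum_quadraticChar_eval_le hF (monic_prod_of_monic T _ fun i _ ↦ monic_X_add_C (b i))
    (not_isSquare_prod_X_add_C hb hT)
  simpa [natDegree_prod_of_monic _ _ fun i _ ↦ monic_X_add_C (b i), eval_prod] using h

theorem abs_sum_prod_one_add_units_mul_quadraticChar_sub_card_le [Fintype ι]
    (hF : ringChar F ≠ 2) {b : ι → F} (hb : Function.Injective b) (ε : ι → ℤˣ) :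
    |((∑ x, ∏ i, (1 + ε i * quadraticChar F (x + b i)) : ℤ) : ℝ) - Fintype.card F| ≤
      2 ^ Fintype.card ι * ((9 * Fintype.card ι + 26) * √(Fintype.card F)) := by
  classical
  have hexpand : ∑ x, ∏ i, (1 + ε i * quadraticChar F (x + b i)) = Fintype.card F +
      ∑ T ∈ Finset.univ.erase ∅, (∏ i ∈ T, (ε i : ℤ)) *
        ∑ x, ∏ i ∈ T, quadraticChar F (x + b i) := by
    simp only [Finset.prod_one_add, Finset.prod_mul_distrib, Finset.powerset_univ]
    rw [Finset.sum_comm, ← Finset.add_sum_erase _ _ (Finset.mem_univ ∅)]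
    simp [Finset.mul_sum]
  have hterm (T : Finset ι) (hT : T ∈ Finset.univ.erase ∅) :
      |(((∏ i ∈ T, (ε i : ℤ)) * ∑ x, ∏ i ∈ T, quadraticChar F (x + b i) : ℤ) : ℝ)| ≤
        (9 * Fintype.card ι + 26) * √(Fintype.card F) := by
    have hsign : |∏ i ∈ T, (ε i : ℤ)| = 1 :=
      Int.isUnit_iff_abs_eq.1 (by simp)
    rw [← Int.cast_abs, abs_mul, hsign, one_mul, Int.cast_abs]
    refine (abs_sum_prod_quadraticChar_add_le hF hb.injOn
      (Finset.nonempty_iff_ne_empty.2 (Finset.ne_of_mem_erase hT))).trans ?_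
    gcongr
    exact Finset.card_le_univ T
  rw [hexpand, Int.cast_add, Int.cast_natCast, add_sub_cancel_left, Int.cast_sum]
  calc _ ≤ ∑ T ∈ Finset.univ.erase ∅, |(_ : ℝ)| := Finset.abs_sum_le_sum_abs _ _
    _ ≤ ∑ T ∈ Finset.univ.erase (∅ : Finset ι), _ := Finset.sum_le_sum hterm
    _ ≤ ∑ T : Finset ι, (9 * Fintype.card ι + 26) * √(Fintype.card F) :=
      Finset.sum_le_univ_sum_of_nonneg fun _ ↦ by positivity
    _ = _ := by simp

end QuadraticCharProd

section SquarePattern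

variable {F : Type*} [Field F] [Fintype F] [DecidableEq F]

theorem one_add_units_mul_quadraticChar (ε : ℤˣ) {y : F} (hy : y ≠ 0) :
    1 + ε * quadraticChar F y = if (IsSquare y ↔ ε = 1) then 2 else 0 := by
  rcases Int.units_eq_one_or ε with rfl | rfl <;> by_cases hsq : IsSquare y <;>
    simp [quadraticChar_apply, quadraticCharFun, hy, hsq]

theorem one_add_units_mul_quadraticChar_mem_Icc (ε : ℤˣ) (y : F) :
    1 + ε * quadraticChar F y ∈ Set.Icc 0 2 := by
  rcases eq_or_ne y 0 with rfl | hy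
  · simp
  · rw [one_add_units_mul_quadraticChar ε hy]
    split_ifs <;> simp

variable {ι : Type*} [Fintype ι]

theorem abs_ite_sub_prod_one_add_units_mul_quadraticChar_le (ε : ι → ℤˣ) (y : ι → F) :
    |(if ∀ i, (IsSquare (y i) ↔ ε i = 1) then 2 ^ Fintype.card ι else 0) -
        ∏ i, (1 + ε i * quadraticChar F (y i))| ≤
      2 ^ Fintype.card ι * ((Finset.univ.filter fun i ↦ y i = 0).card : ℤ) := by
  by_cases hy : ∀ i, y i ≠ 0
  · have hprod : ∏ i, (1 + ε i * quadraticChar F (y i)) =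
        ∏ i, if (IsSquare (y i) ↔ ε i = 1) then 2 else 0 := 
      Finset.prod_congr rfl fun i _ ↦ one_add_units_mul_quadraticChar (ε i) (hy i)
    rw [hprod, Fintype.prod_ite_zero]
    simp
  · have hzero : 1 ≤ (Finset.univ.filter fun i ↦ y i = 0).card := by
      simpa [Finset.one_le_card, Finset.filter_nonempty_iff] using hy
    have hmem := one_add_units_mul_quadraticChar_mem_Icc (F := F)
    refine (abs_sub_le_of_nonneg_of_le (by positivity) ?_
      (Finset.prod_nonneg fun i _ ↦ (hmem _ _).1) ?_).trans
      (le_mul_of_one_le_right (by positivity) (by exact_mod_cast hzero))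
    · split_ifs <;> simp
    · exact (Finset.prod_le_prod (fun i _ ↦ (hmem _ _).1) fun i _ ↦ (hmem _ _).2).trans_eq (by simp)

theorem sum_card_filter_add_eq_zero (b : ι → F) :
    ∑ x, (Finset.univ.filter fun i ↦ x + b i = 0).card = Fintype.card ι := by
  simp only [Finset.card_filter]
  rw [Finset.sum_comm]
  simp [add_eq_zero_iff_eq_neg]

theorem abs_two_pow_mul_card_sub_sum_prod_le (ε : ι → ℤˣ) (b : ι → F) :
    |2 ^ Fintype.card ι *
          ((Finset.univ.filter fun x ↦ ∀ i, IsSquare (x + b i) ↔ ε i = 1).card : ℤ) -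
        ∑ x, ∏ i, (1 + ε i * quadraticChar F (x + b i))| ≤
      2 ^ Fintype.card ι * Fintype.card ι := by
  have hcard : 2 ^ Fintype.card ι *
      ((Finset.univ.filter fun x ↦ ∀ i, IsSquare (x + b i) ↔ ε i = 1).card : ℤ) =
      ∑ x, if ∀ i, (IsSquare (x + b i) ↔ ε i = 1) then 2 ^ Fintype.card ι else 0 := by
    simp [← Finset.sum_filter, mul_comm]
  rw [hcard, ← Finset.sum_sub_distrib]
  calc _ ≤ ∑ x, |(_ : ℤ)| := Finset.abs_sum_le_sum_abs _ _
    _ ≤ ∑ x, _ := Finset.sum_le_sum fun x _ ↦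
      abs_ite_sub_prod_one_add_units_mul_quadraticChar_le ε fun i ↦ x + b i
    _ = _ := by rw [← Finset.mul_sum]; exact_mod_cast congrArg _ (sum_card_filter_add_eq_zero b)

theorem abs_card_sub_card_div_two_pow_le (hF : ringChar F ≠ 2) {b : ι → F}
    (hb : Function.Injective b) (ε : ι → ℤˣ) :
    |((Finset.univ.filter fun x ↦ ∀ i, IsSquare (x + b i) ↔ ε i = 1).card : ℝ) -
        Fintype.card F / 2 ^ Fintype.card ι| ≤
      (10 * Fintype.card ι + 26) * √(Fintype.card F) := by
  set N := (Finset.univ.filter fun x ↦ ∀ i, IsSquare (x + b i) ↔ ε i = 1).card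
  set P := ∑ x, ∏ i, (1 + ε i * quadraticChar F (x + b i))
  have hindicator : |2 ^ Fintype.card ι * (N : ℝ) - P| ≤
      2 ^ Fintype.card ι * (Fintype.card ι : ℝ) := by
    exact_mod_cast abs_two_pow_mul_card_sub_sum_prod_le ε b
  have hchar : |(P : ℝ) - Fintype.card F| ≤ _ :=
    abs_sum_prod_one_add_units_mul_quadraticChar_sub_card_le hF hb ε
  have hpow : (0 : ℝ) < 2 ^ Fintype.card ι := by positivity
  refine le_of_mul_le_mul_left ?_ hpow
  calc 2 ^ Fintype.card ι * |(N : ℝ) - Fintype.card F / 2 ^ Fintype.card ι|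
      = |2 ^ Fintype.card ι * (N : ℝ) - Fintype.card F| := by
        rw [← abs_of_pos hpow, ← abs_mul, abs_of_pos hpow, mul_sub, mul_div_cancel₀ _ hpow.ne']
    _ ≤ |2 ^ Fintype.card ι * (N : ℝ) - P| + |(P : ℝ) - Fintype.card F| := abs_sub_le _ _ _
    _ ≤ 2 ^ Fintype.card ι * (Fintype.card ι * √(Fintype.card F)) +
        2 ^ Fintype.card ι * ((9 * Fintype.card ι + 26) * √(Fintype.card F)) := by
      refine add_le_add (hindicator.trans ?_) hchar
      gcongr
      exact le_mul_of_one_le_right (by positivity) (one_le_sqrt_card F)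
    _ = _ := by ring

end SquarePattern

theorem statement18_general {ι F : Type*} [Fintype ι] [Field F] [Fintype F] (hF : ringChar F ≠ 2)
    {b : ι → F} (hb : Function.Injective b) (I : Set ι) :
    |(Set.ncard {x : F | ∀ i, IsSquare (x + b i) ↔ i ∈ I} : ℝ) -
        Fintype.card F / 2 ^ Fintype.card ι| ≤
      (10 * Fintype.card ι + 26) * √(Fintype.card F) := by
  classical
  simpa [Set.ncard_eq_toFinset_card'] using
    abs_card_sub_card_div_two_pow_le hF hb fun i ↦ if i ∈ I then 1 else -1

theorem exists_sq_eq_and_forall_ne_not_exists_sq_eq_iff {ι M : Type*} [Monoid M] {y : ι → M}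
    {i₀ : ι} : ((∃ z, z ^ 2 = y i₀) ∧ ∀ i, i ≠ i₀ → ¬ ∃ z, z ^ 2 = y i) ↔
      ∀ i, IsSquare (y i) ↔ i ∈ ({i₀} : Set ι) := by
  have hsq (i : ι) : (∃ z, z ^ 2 = y i) ↔ IsSquare (y i) := by
    simp only [isSquare_iff_exists_sq, eq_comm]
  simp only [hsq, Set.mem_singleton_iff]
  exact ⟨fun h i ↦ ⟨not_imp_not.1 (h.2 i), fun hi ↦ hi ▸ h.1⟩,
    fun h ↦ ⟨(h i₀).2 rfl, fun i ↦ mt (h i).1⟩⟩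

/-- For every `n ≥ 1` there is a constant `C_n > 0` such that for every
finite field `𝔽_q` of odd characteristic and all pairwise distinct `b₁, …, b_n ∈ 𝔽_q`, the set
`S = {x : x + b₁ is a square, and x + bᵢ is not a square for 2 ≤ i ≤ n}` satisfies
`| |S| - q / 2ⁿ | ≤ C_n √q`. -/
theorem statement18 (n : ℕ) (hn : 1 ≤ n) :
    ∃ C : ℝ, 0 < C ∧
      ∀ (F : Type) (_ : Field F) (_ : Fintype F), ringChar F ≠ 2 →
        ∀ b : Fin n → F, Function.Injective b →
          |(Set.ncard {x : F | (∃ z : F, z ^ 2 = x + b ⟨0, hn⟩) ∧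
                ∀ i : Fin n, i ≠ ⟨0, hn⟩ → ¬ ∃ z : F, z ^ 2 = x + b i} : ℝ) -
              (Fintype.card F : ℝ) / 2 ^ n| ≤ C * Real.sqrt (Fintype.card F) := by
  refine ⟨10 * n + 26, by positivity, fun F _ _ hF b hb ↦ ?_⟩
  have h := statement18_general hF hb {⟨0, hn⟩}
  simp only [← exists_sq_eq_and_forall_ne_not_exists_sq_eq_iff, Fintype.card_fin] at h
  exact h
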